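/- arXiv:2506.07071 — 2 statements merged into one kernel-verified Lean document; each statement's English description precedes it below -/
import Mathlib

section
/- Let (E,𝒞,r) be a semimatroid and ≺ a linear order on E. Then (−1)^{r(𝒞)} · χ(𝒞;−1) equals the number of central sets X ∈ 𝒞 that contain no broken circuit of 𝒞 with respect to ≺. -/
open scoped Classical

/-- A semimatroid on a finite ground set `E`: a nonempty, subset-closed collection `C`
of "central" subsets of `E`, together with a rank function `r` satisfying (SR1)-(SR5). -/
structure Semimatroid (E : Type*) [DecidableEq E] [Fintype E] where
  C : Finset (Finset E)
  r : Finset E → ℕ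
  C_nonempty : C.Nonempty
  mem_of_subset : ∀ ⦃X Y : Finset E⦄, X ∈ C → Y ⊆ X → Y ∈ C
  r_le_card : ∀ ⦃X : Finset E⦄, X ∈ C → r X ≤ X.card
  r_mono : ∀ ⦃X Y : Finset E⦄, X ∈ C → Y ∈ C → X ⊆ Y → r X ≤ r Y
  submodular : ∀ ⦃X Y : Finset E⦄, X ∈ C → Y ∈ C → X ∪ Y ∈ C →
    r (X ∩ Y) + r (X ∪ Y) ≤ r X + r Y
  union_mem : ∀ ⦃X Y : Finset E⦄, X ∈ C → Y ∈ C → r X = r (X ∩ Y) → X ∪ Y ∈ C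
  augment : ∀ ⦃X Y : Finset E⦄, X ∈ C → Y ∈ C → r X < r Y →
    ∃ e ∈ Y \ X, insert e X ∈ C

namespace Semimatroid

variable {E : Type*} [DecidableEq E] [Fintype E] (S : Semimatroid E)

/-- The rank `r(𝒞)` of the semimatroid: the common rank of the maximal central sets. -/
def rank : ℕ := S.C.sup S.r

/-- The closure of a central set `X`:
`cl X = {e ∈ E : X ∪ {e} ∈ 𝒞 and r (X ∪ {e}) = r X}`. -/
def cl (X : Finset E) : Finset E :=
  Finset.univ.filter fun e => insert e X ∈ S.C ∧ S.r (insert e X) = S.r X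

/-- The flats of the semimatroid: central sets `X` with `cl X = X`. -/
def flats : Finset (Finset E) := S.C.filter fun X => S.cl X = X

/-- The characteristic polynomial `χ(𝒞;t) = Σ_{X ∈ 𝒞} (−1)^{|X|} t^{r(𝒞)−r(X)}`. -/
noncomputable def charPoly : Polynomial ℤ :=
  ∑ A ∈ S.C, (-1 : Polynomial ℤ) ^ A.card * Polynomial.X ^ (S.rank - S.r A)

end Semimatroid

namespace Semimatroid

variable {E : Type*} [DecidableEq E] [Fintype E] (S : Semimatroid E)

/-- A circuit of a semimatroid: a minimal dependent central set. -/
def IsCircuit (K : Finset E) : Prop :=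
  K ∈ S.C ∧ S.r K < K.card ∧ ∀ Y ⊂ K, S.r Y = Y.card

variable [LinearOrder E]

/-- A broken circuit w.r.t. a linear order on `E`: a circuit with its least element removed. -/
def IsBrokenCircuit (B : Finset E) : Prop :=
  ∃ K, S.IsCircuit K ∧ ∃ e ∈ K, (∀ x ∈ K, e ≤ x) ∧ B = K.erase e

end Semimatroid

namespace Semimatroid

section Helpers

variable {E : Type*} [Fintype E] [LinearOrder E] (S : Semimatroid E)

/-- `e` is the least element of a circuit `K` with `K \ e` contained in `X`. -/
def Active (X : Finset E) (e : E) : Prop :=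
  ∃ K, S.IsCircuit K ∧ e ∈ K ∧ (∀ x ∈ K, e ≤ x) ∧ K.erase e ⊆ X

/-- Toggle membership of `e` in `X`. -/
def toggle (X : Finset E) (e : E) : Finset E :=
  if e ∈ X then X.erase e else insert e X

theorem mem_toggle_of_ne (X : Finset E) {e x : E} (h : x ≠ e) :
    x ∈ toggle X e ↔ x ∈ X := by
  unfold toggle; split_ifs <;> simp [h]

theorem toggle_toggle (X : Finset E) (e : E) : toggle (toggle X e) e = X := by
  unfold toggle
  by_cases h : e ∈ X <;> simp [h]

theorem toggle_ne (X : Finset E) (e : E) : toggle X e ≠ X := by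
  unfold toggle
  intro h
  by_cases h' : e ∈ X
  · rw [if_pos h'] at h
    have := h ▸ h'
    simp at this
  · rw [if_neg h'] at h
    exact h' (h ▸ Finset.mem_insert_self e X)

theorem neg_one_pow_toggle (X : Finset E) (e : E) :
    (-1 : ℤ) ^ (toggle X e).card = - (-1 : ℤ) ^ X.card := by
  unfold toggle
  by_cases h : e ∈ X
  · rw [if_pos h, ← Finset.card_erase_add_one h, pow_succ]; ring
  · rw [if_neg h, Finset.card_insert_of_notMem h, pow_succ]; ring

variable {S}

theorem active_toggle {X : Finset E} {e e' : E} (hle : e ≤ e') :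
    S.Active (toggle X e) e' ↔ S.Active X e' := by
  unfold Active
  refine exists_congr fun K => and_congr_right fun _ => and_congr_right fun _ =>
    and_congr_right fun hmin => ?_
  have key : ∀ x ∈ K.erase e', x ≠ e := by
    intro x hx h
    have h1 := hmin x (Finset.mem_of_mem_erase hx)
    exact Finset.ne_of_mem_erase hx (le_antisymm (h ▸ hle) h1)
  constructor
  · intro h x hx
    exact (mem_toggle_of_ne X (key x hx)).1 (h hx)
  · intro h x hx
    exact (mem_toggle_of_ne X (key x hx)).2 (h hx)

theorem insert_of_active {X : Finset E} (hX : X ∈ S.C) {e : E} (h : S.Active X e) :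
    insert e X ∈ S.C ∧ S.r (insert e X) = S.r X := by
  obtain ⟨K, ⟨hK, hr, hmin⟩, he, -, hsub⟩ := h
  have hu : K ∪ X = insert e X := by
    ext x
    by_cases hx : x = e
    · subst hx; simp [he]
    · have : x ∈ K → x ∈ X := fun h => hsub (Finset.mem_erase.2 ⟨hx, h⟩)
      simp only [Finset.mem_union, Finset.mem_insert]; tauto
  have hI : K ∩ X ∈ S.C := S.mem_of_subset hK Finset.inter_subset_left
  have hE : K.erase e ∈ S.C := S.mem_of_subset hK (Finset.erase_subset _ _)
  have h1 := hmin _ (Finset.erase_ssubset he)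
  have h2 := Finset.card_erase_add_one he
  have h3 := S.r_mono hE hI (Finset.subset_inter (Finset.erase_subset _ _) hsub)
  have h4 := S.r_mono hI hK Finset.inter_subset_left
  have h5 : S.r K = S.r (K ∩ X) := by omega
  have h6 := S.union_mem hK hX h5
  have h7 := S.submodular hK hX h6
  rw [hu] at h6 h7
  have h8 := S.r_mono hX h6 (Finset.subset_insert _ _)
  exact ⟨h6, by omega⟩

theorem toggle_of_active {X : Finset E} (hX : X ∈ S.C) {e : E} (h : S.Active X e) :
    toggle X e ∈ S.C ∧ S.r (toggle X e) = S.r X := by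
  by_cases he : e ∈ X
  · have h' := (active_toggle le_rfl).2 h
    unfold toggle at h' ⊢
    rw [if_pos he] at h' ⊢
    have hm : X.erase e ∈ S.C := S.mem_of_subset hX (Finset.erase_subset _ _)
    have := insert_of_active hm h'
    rw [Finset.insert_erase he] at this
    exact ⟨hm, this.2.symm⟩
  · unfold toggle
    rw [if_neg he]
    exact insert_of_active hX h

theorem exists_circuit {X : Finset E} (hX : X ∈ S.C) (h : S.r X ≠ X.card) :
    ∃ K, S.IsCircuit K ∧ K ⊆ X := by
  induction X using Finset.strongInduction with
  | H X ih =>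
    by_cases hc : ∀ Y ⊂ X, S.r Y = Y.card
    · exact ⟨X, ⟨hX, lt_of_le_of_ne (S.r_le_card hX) h, hc⟩, subset_rfl⟩
    · push Not at hc
      obtain ⟨Y, hY, hne⟩ := hc
      obtain ⟨K, hK, hs⟩ := ih Y hY (S.mem_of_subset hX hY.subset) hne
      exact ⟨K, hK, hs.trans hY.subset⟩

theorem indep_of_not_active {X : Finset E} (hX : X ∈ S.C) (h : ∀ e, ¬ S.Active X e) :
    S.r X = X.card := by
  by_contra hne
  obtain ⟨K, hK, hs⟩ := exists_circuit hX hne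
  have hne : K.Nonempty := by
    rw [← Finset.card_pos]; have := hK.2.1; omega
  exact h (K.min' hne) ⟨K, hK, K.min'_mem hne, fun x hx => K.min'_le x hx,
    (Finset.erase_subset _ _).trans hs⟩

theorem nbc_iff (X : Finset E) :
    (∀ B : Finset E, S.IsBrokenCircuit B → ¬ B ⊆ X) ↔ ∀ e, ¬ S.Active X e := by
  constructor
  · rintro h e ⟨K, hK, he, hmin, hs⟩
    exact h _ ⟨K, hK, e, he, hmin, rfl⟩ hs
  · rintro h B ⟨K, hK, e, he, hmin, rfl⟩ hs
    exact h e ⟨K, hK, he, hmin, hs⟩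

theorem exists_max_active {X : Finset E} (h : ∃ e, S.Active X e) :
    ∃ e, S.Active X e ∧ ∀ e', S.Active X e' → e' ≤ e := by
  obtain ⟨e, he⟩ := h
  obtain ⟨m, hm, hmax⟩ := (Finset.univ.filter fun e => S.Active X e).exists_max_image id
    ⟨e, by simpa using he⟩
  exact ⟨m, by simpa using hm, fun e' h' => hmax e' (by simpa using h')⟩

theorem sum_active_eq_zero :
    ∑ X ∈ S.C.filter (fun X => ¬ ∀ e, ¬ S.Active X e),
      (-1 : ℤ) ^ X.card * (-1) ^ S.r X = 0 := by
  have hex : ∀ X ∈ S.C.filter (fun X => ¬ ∀ e, ¬ S.Active X e),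
      ∃ e, S.Active X e ∧ ∀ e', S.Active X e' → e' ≤ e := by
    intro X hX
    have := (Finset.mem_filter.1 hX).2
    push Not at this
    exact exists_max_active this
  choose m hm hmax using hex
  have hmem : ∀ X hX, toggle X (m X hX) ∈ S.C.filter (fun X => ¬ ∀ e, ¬ S.Active X e) := by
    intro X hX
    refine Finset.mem_filter.2
      ⟨(toggle_of_active (Finset.mem_filter.1 hX).1 (hm X hX)).1, fun h => ?_⟩
    exact h _ ((active_toggle le_rfl).2 (hm X hX))
  refine Finset.sum_involution (fun X hX => toggle X (m X hX)) ?_ ?_ hmem ?_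
  · intro X hX
    rw [(toggle_of_active (Finset.mem_filter.1 hX).1 (hm X hX)).2, neg_one_pow_toggle]
    ring
  · intro X hX _
    exact toggle_ne _ _
  · intro X hX
    have h1 : m X hX ≤ m _ (hmem X hX) :=
      hmax _ (hmem X hX) _ ((active_toggle le_rfl).2 (hm X hX))
    have h2 : m _ (hmem X hX) ≤ m X hX :=
      hmax X hX _ ((active_toggle h1).1 (hm _ (hmem X hX)))
    have h3 := le_antisymm h2 h1
    simp only [h3, toggle_toggle]

end Helpers

end Semimatroid

/-- `(−1)^{r(𝒞)} χ(𝒞;−1)` equals the number of central sets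
containing no broken circuit with respect to a linear order on `E`. -/
theorem Semimatroid.charPoly_eval_neg_one
    {E : Type*} [Fintype E] [LinearOrder E] (S : Semimatroid E) :
    (-1 : ℤ) ^ S.rank * S.charPoly.eval (-1) =
      ((S.C.filter fun X : Finset E =>
        ∀ B : Finset E, S.IsBrokenCircuit B → ¬ B ⊆ X).card : ℤ) := by
  have h1 : (-1 : ℤ) ^ S.rank * S.charPoly.eval (-1) =
      ∑ X ∈ S.C, (-1 : ℤ) ^ X.card * (-1) ^ S.r X := by
    unfold charPoly
    rw [Polynomial.eval_finset_sum, Finset.mul_sum]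
    refine Finset.sum_congr rfl fun X hX => ?_
    have hle : S.r X ≤ S.rank := Finset.le_sup (f := S.r) hX
    obtain ⟨k, hk⟩ := Nat.exists_eq_add_of_le hle
    have h2 : ((-1 : ℤ) ^ k) * (-1) ^ k = 1 := by
      rw [← mul_pow]; simp
    simp only [Polynomial.eval_mul, Polynomial.eval_pow, Polynomial.eval_neg,
      Polynomial.eval_one, Polynomial.eval_X]
    rw [hk, Nat.add_sub_cancel_left, pow_add]
    linear_combination ((-1 : ℤ) ^ X.card * (-1) ^ S.r X) * h2
  rw [h1, ← Finset.sum_filter_add_sum_filter_not S.C (fun X => ∀ e, ¬ S.Active X e),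
    sum_active_eq_zero, add_zero]
  have h2 : ∀ X ∈ S.C.filter (fun X => ∀ e, ¬ S.Active X e),
      (-1 : ℤ) ^ X.card * (-1) ^ S.r X = 1 := by
    intro X hX
    rw [indep_of_not_active (Finset.mem_filter.1 hX).1 (Finset.mem_filter.1 hX).2,
      ← mul_pow]
    simp
  rw [Finset.sum_congr rfl h2]
  simp only [nbc_iff, Finset.sum_const, nsmul_eq_mul, mul_one]
end

section
/- Let (E,𝒞,r) be a semimatroid without loops. Then w_0(𝒞) = 1 and w_i(𝒞) > 0 for every 0 ≤ i ≤ r(𝒞); in other words, the coefficients of the characteristic polynomial χ(𝒞;t) are all nonzero and strictly alternate in sign, starting with leading coefficient 1. -/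
namespace Semimatroid

variable {E : Type*} [DecidableEq E] [Fintype E] (S : Semimatroid E)

/-- The `i`-th unsigned Whitney number of the first kind:
`w_i(𝒞) = (−1)^i ⋅ (coefficient of t^{r(𝒞)−i} in χ(𝒞;t))`. -/
noncomputable def whitney (i : ℕ) : ℤ :=
  (-1 : ℤ) ^ i * S.charPoly.coeff (S.rank - i)

end Semimatroid

namespace Semimatroid

section aux

variable {E : Type*} [DecidableEq E] [Fintype E] (S : Semimatroid E)

/-- `e` is in the closure of the part of `X` above `e` (a broken-circuit witness). -/
def Bad (f : E → ℕ) (X : Finset E) (e : E) : Prop :=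
  insert e (X.filter (fun x => f e < f x)) ∈ S.C ∧
    S.r (insert e (X.filter (fun x => f e < f x))) = S.r (X.filter (fun x => f e < f x))

theorem empty_mem' : ∅ ∈ S.C := by
  obtain ⟨X, hX⟩ := S.C_nonempty
  exact S.mem_of_subset hX (Finset.empty_subset _)

theorem r_empty' : S.r ∅ = 0 := by
  have := S.r_le_card S.empty_mem'
  simpa using this

theorem r_insert_le' {e : E} {X : Finset E} (h : insert e X ∈ S.C) :
    S.r (insert e X) ≤ S.r X + 1 := by
  have hX : X ∈ S.C := S.mem_of_subset h (Finset.subset_insert _ _)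
  have he : {e} ∈ S.C := S.mem_of_subset h (by simp)
  have h1 := S.submodular hX he (by rw [Finset.union_comm, ← Finset.insert_eq]; exact h)
  rw [Finset.union_comm X {e}, ← Finset.insert_eq] at h1
  have h2 := S.r_le_card he
  simp at h2
  omega

theorem indep_subset {X Z : Finset E} (hX : X ∈ S.C) (h : X.card ≤ S.r X) (hZ : Z ⊆ X) :
    S.r Z = Z.card := by
  have hZC := S.mem_of_subset hX hZ
  have hD : X \ Z ∈ S.C := S.mem_of_subset hX Finset.sdiff_subset
  have hu : Z ∪ (X \ Z) = X := Finset.union_sdiff_of_subset hZ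
  have h1 := S.submodular hZC hD (by rw [hu]; exact hX)
  rw [hu] at h1
  have h2 := S.r_le_card hD
  have h3 := Finset.card_sdiff_add_card_eq_card hZ
  have h4 := S.r_le_card hZC
  omega

theorem exists_indep (X : Finset E) : X ∈ S.C → ∀ j ≤ S.r X,
    ∃ Z ⊆ X, S.r Z = j ∧ Z.card = j := by
  induction X using Finset.induction_on with
  | empty =>
    intro _ j hj
    rw [S.r_empty'] at hj
    obtain rfl : j = 0 := by omega
    exact ⟨∅, subset_rfl, S.r_empty', rfl⟩
  | insert e X he ih =>
    intro hC j hj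
    have hX : X ∈ S.C := S.mem_of_subset hC (Finset.subset_insert _ _)
    by_cases hjX : j ≤ S.r X
    · obtain ⟨Z, hZ, h1, h2⟩ := ih hX j hjX
      exact ⟨Z, hZ.trans (Finset.subset_insert _ _), h1, h2⟩
    · obtain ⟨Z, hZ, h1, h2⟩ := ih hX (S.r X) le_rfl
      have h3 := S.r_insert_le' hC
      have heZ : e ∉ Z := fun h => he (hZ h)
      have hZC : insert e Z ∈ S.C := S.mem_of_subset hC (Finset.insert_subset_insert _ hZ)
      have hu : X ∪ insert e Z = insert e X := by
        ext x; have := @hZ x; simp; tauto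
      have hi : X ∩ insert e Z = Z := by
        ext x; have := @hZ x; simp
        constructor
        · rintro ⟨h, rfl | h'⟩
          · exact absurd h he
          · exact h'
        · exact fun h => ⟨this h, Or.inr h⟩
      have h4 := S.submodular hX hZC (by rw [hu]; exact hC)
      rw [hu, hi] at h4
      have h5 := S.r_le_card hZC
      rw [Finset.card_insert_of_notMem heZ] at h5
      refine ⟨insert e Z, Finset.insert_subset_insert _ hZ, by omega, ?_⟩
      rw [Finset.card_insert_of_notMem heZ]
      omega

theorem card_le_of_not_bad (f : E → ℕ) (hf : Function.Injective f) (X : Finset E) :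
    X ∈ S.C → (∀ e ∈ X, ¬ S.Bad f X e) → X.card ≤ S.r X := by
  induction X using Finset.induction_on_min_value f with
  | empty => simp
  | insert a s ha hle ih =>
    intro hC hb
    have hs : s ∈ S.C := S.mem_of_subset hC (Finset.subset_insert _ _)
    have hfa : ∀ e ∈ insert a s,
        (insert a s).filter (fun x => f e < f x) = s.filter (fun x => f e < f x) := by
      intro e he
      rw [Finset.filter_insert, if_neg]
      rcases Finset.mem_insert.1 he with rfl | h
      · simp
      · have := hle e h; omega
    have h1 := ih hs (by
      intro e he hbad
      apply hb e (Finset.mem_insert_of_mem he)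
      unfold Bad at hbad ⊢
      rwa [hfa e (Finset.mem_insert_of_mem he)])
    have hfs : s.filter (fun x => f a < f x) = s := by
      apply Finset.filter_true_of_mem
      intro x hx
      refine lt_of_le_of_ne (hle x hx) ?_
      intro h
      exact ha (hf h ▸ hx)
    have h2 := hb a (Finset.mem_insert_self _ _)
    unfold Bad at h2
    rw [hfa a (Finset.mem_insert_self _ _), hfs] at h2
    have h3 := S.r_mono hs hC (Finset.subset_insert _ _)
    rw [Finset.card_insert_of_notMem ha]
    have h4 : S.r (insert a s) ≠ S.r s := fun h => h2 ⟨hC, h⟩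
    omega

theorem bad_insert (f : E → ℕ) {X : Finset E} {e : E} (hX : X ∈ S.C) (hb : S.Bad f X e) :
    insert e X ∈ S.C ∧ S.r (insert e X) = S.r X := by
  obtain ⟨h1, h2⟩ := hb
  set F := X.filter (fun x => f e < f x) with hF
  have hFX : F ⊆ X := Finset.filter_subset _ _
  by_cases he : e ∈ X
  · rw [Finset.insert_eq_of_mem he]; exact ⟨hX, rfl⟩
  have hi : insert e F ∩ X = F := by
    rw [Finset.insert_inter_of_notMem he, Finset.inter_eq_left.2 hFX]
  have hu : insert e F ∪ X = insert e X := by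
    rw [Finset.insert_union, Finset.union_eq_right.2 hFX]
  have h3 := S.union_mem h1 hX (by rw [hi, h2])
  have h4 := S.submodular h1 hX h3
  rw [hu] at h3 h4
  rw [hi] at h4
  have h5 := S.r_mono hX h3 (Finset.subset_insert _ _)
  exact ⟨h3, by omega⟩

theorem bad_erase (f : E → ℕ) {X : Finset E} {e : E} (hX : X ∈ S.C) (hb : S.Bad f X e)
    (he : e ∈ X) : S.r (X.erase e) = S.r X := by
  have hC : X.erase e ∈ S.C := S.mem_of_subset hX (Finset.erase_subset _ _)
  have hb' : S.Bad f (X.erase e) e := by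
    unfold Bad at hb ⊢
    rwa [Finset.filter_erase, Finset.erase_eq_of_notMem (by simp)]
  have := (S.bad_insert f hC hb').2
  rw [Finset.insert_erase he] at this
  exact this.symm

/-- Toggle membership of `e`. -/
def tog (X : Finset E) (e : E) : Finset E := if e ∈ X then X.erase e else insert e X

theorem filter_tog (f : E → ℕ) (X : Finset E) (e e' : E) (h : f e ≤ f e') :
    (tog X e).filter (fun x => f e' < f x) = X.filter (fun x => f e' < f x) := by
  unfold tog
  split_ifs
  · rw [Finset.filter_erase, Finset.erase_eq_of_notMem]
    simp; omega
  · rw [Finset.filter_insert, if_neg (by omega)]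

theorem bad_tog (f : E → ℕ) (X : Finset E) (e e' : E) (h : f e ≤ f e') :
    S.Bad f (tog X e) e' ↔ S.Bad f X e' := by
  unfold Bad
  rw [filter_tog f X e e' h]

theorem tog_tog (X : Finset E) (e : E) : tog (tog X e) e = X := by
  unfold tog
  by_cases h : e ∈ X
  · simp [h, Finset.insert_erase]
  · simp [h, Finset.erase_insert]

theorem sign_tog (X : Finset E) (e : E) :
    (-1 : ℤ) ^ X.card + (-1 : ℤ) ^ (tog X e).card = 0 := by
  unfold tog
  by_cases h : e ∈ X
  · rw [if_pos h, ← Finset.card_erase_add_one h, pow_succ]; ring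
  · rw [if_neg h, Finset.card_insert_of_notMem h, pow_succ]; ring

theorem tog_mem (f : E → ℕ) {X : Finset E} {e : E} (hX : X ∈ S.C) (hb : S.Bad f X e) :
    tog X e ∈ S.C ∧ S.r (tog X e) = S.r X := by
  unfold tog
  split_ifs with h
  · exact ⟨S.mem_of_subset hX (Finset.erase_subset _ _), S.bad_erase f hX hb h⟩
  · exact S.bad_insert f hX hb

open Classical in
theorem sum_bad (f : E → ℕ) (hf : Function.Injective f) (i : ℕ) :
    ∑ X ∈ (S.C.filter (fun X => S.r X = i)).filter (fun X => ∃ e, S.Bad f X e),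
      (-1 : ℤ) ^ X.card = 0 := by
  have hmax : ∀ X : Finset E, ∃ m : (∃ e, S.Bad f X e) → E, ∀ h : (∃ e, S.Bad f X e),
      S.Bad f X (m h) ∧ ∀ e', S.Bad f X e' → f e' ≤ f (m h) := by
    intro X
    have : ∀ h : (∃ e, S.Bad f X e), ∃ m, S.Bad f X m ∧ ∀ e', S.Bad f X e' → f e' ≤ f m := by
      rintro ⟨e, he⟩
      obtain ⟨m, hm, hm'⟩ := Finset.exists_max_image
        (Finset.univ.filter (fun e => S.Bad f X e)) f ⟨e, by simpa using he⟩
      exact ⟨m, by simpa using hm, fun e' he' => hm' e' (by simpa using he')⟩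
    choose m hm using this
    exact ⟨m, hm⟩
  choose m hm using hmax
  have hP : ∀ X ∈ (S.C.filter (fun X => S.r X = i)).filter (fun X => ∃ e, S.Bad f X e),
      ∃ e, S.Bad f X e := fun X hX => (Finset.mem_filter.1 hX).2
  have hbad : ∀ X (h : ∃ e, S.Bad f X e), S.Bad f (tog X (m X h)) (m X h) := fun X h =>
    (S.bad_tog f X _ _ le_rfl).2 (hm X h).1
  have hmm : ∀ X (h : ∃ e, S.Bad f X e) (h' : ∃ e, S.Bad f (tog X (m X h)) e),
      m (tog X (m X h)) h' = m X h := by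
    intro X h h'
    apply hf
    have h1 := (hm _ h').2 _ (hbad X h)
    refine le_antisymm ?_ h1
    exact (hm X h).2 _ ((S.bad_tog f X _ _ h1).1 (hm _ h').1)
  refine Finset.sum_involution (fun X hX => tog X (m X (hP X hX))) ?_ ?_ ?_ ?_
  · intro X hX
    exact sign_tog _ _
  · intro X hX _ heq
    have h1 := sign_tog X (m X (hP X hX))
    rw [heq] at h1
    have : (-1 : ℤ) ^ X.card ≠ 0 := by simp
    omega
  · intro X hX
    have h1 := Finset.mem_filter.1 hX
    have h2 := Finset.mem_filter.1 h1.1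
    have h3 := S.tog_mem f h2.1 (hm X (hP X hX)).1
    rw [Finset.mem_filter, Finset.mem_filter]
    exact ⟨⟨h3.1, h3.2.trans h2.2⟩, _, hbad X (hP X hX)⟩
  · intro X hX
    simp only [hmm, tog_tog]

theorem exists_nbc (f : E → ℕ)
    (hloopless : ¬ ∃ e : E, {e} ∈ S.C ∧ S.r {e} = 0) (i : ℕ) (hi : i ≤ S.rank) :
    ∃ X ∈ S.C, S.r X = i ∧ ∀ e, ¬ S.Bad f X e := by
  classical
  obtain ⟨Y, hY, hYr⟩ := Finset.exists_mem_eq_sup S.C S.C_nonempty S.r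
  obtain ⟨Z, hZ, hZr, hZc⟩ := S.exists_indep Y hY i (by rw [← hYr]; exact hi)
  obtain ⟨X, hX, hmin⟩ := Finset.exists_min_image
    (S.C.filter (fun X => S.r X = i ∧ X.card = i)) (fun X => ∑ x ∈ X, f x)
    ⟨Z, by simp [hZr, hZc, S.mem_of_subset hY hZ]⟩
  obtain ⟨hXC, hXr, hXc⟩ := Finset.mem_filter.1 hX
  refine ⟨X, hXC, hXr, fun e hb => ?_⟩
  obtain ⟨hXe, hXer⟩ := S.bad_insert f hXC hb
  have heX : e ∉ X := by
    intro he
    have h1 := S.bad_erase f hXC hb he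
    have h2 := S.r_le_card (S.mem_of_subset hXC (Finset.erase_subset e X))
    have h3 := Finset.card_erase_add_one he
    omega
  obtain ⟨Z, hZ, hZmin⟩ := Finset.exists_min_image
    ((X.filter (fun x => f e < f x)).powerset.filter
      (fun Z => S.r (insert e Z) = S.r Z)) (fun Z => Z.card)
    ⟨X.filter (fun x => f e < f x), by simp [hb.2]⟩
  obtain ⟨hZF, hZr⟩ := Finset.mem_filter.1 hZ
  rw [Finset.mem_powerset] at hZF
  have hZX : Z ⊆ X := hZF.trans (Finset.filter_subset _ _)
  have heZ : e ∉ Z := fun h => heX (hZX h)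
  have hZne : Z.Nonempty := by
    rw [Finset.nonempty_iff_ne_empty]
    rintro rfl
    apply hloopless
    refine ⟨e, S.mem_of_subset hXe (by simp), ?_⟩
    rw [S.r_empty'] at hZr
    simpa using hZr
  obtain ⟨d, hd⟩ := hZne
  have hdX := hZX hd
  have hfd : f e < f d := (Finset.mem_filter.1 (hZF hd)).2
  have hed : d ≠ e := by rintro rfl; exact heZ hd
  have hsub : ∀ W ⊆ X, S.r W = W.card := fun W hW =>
    S.indep_subset hXC (by omega) hW
  have hdel : S.r (insert e (Z.erase d)) ≠ S.r (Z.erase d) := by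
    intro h
    have h1 := hZmin (Z.erase d) (Finset.mem_filter.2
      ⟨Finset.mem_powerset.2 ((Finset.erase_subset _ _).trans hZF), h⟩)
    have h2 := Finset.card_erase_add_one hd
    omega
  have hC : ∀ W ⊆ X, insert e W ∈ S.C := fun W hW =>
    S.mem_of_subset hXe (Finset.insert_subset_insert _ hW)
  have hEZ : Z.erase d ⊆ X := (Finset.erase_subset _ _).trans hZX
  have hEX : X.erase d ⊆ X := Finset.erase_subset _ _
  have h1 := S.r_mono (S.mem_of_subset hXC hEZ) (hC _ hEZ) (Finset.subset_insert _ _)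
  have h2 := hsub _ hEZ
  have h3 := hsub _ hZX
  have h4 := Finset.card_erase_add_one hd
  have hu : insert e (X.erase d) ∪ insert e Z = insert e X := by
    ext x
    have := @hZX x
    simp only [Finset.mem_union, Finset.mem_insert, Finset.mem_erase]
    by_cases hx : x = d
    · subst hx; tauto
    · tauto
  have hin : insert e (X.erase d) ∩ insert e Z = insert e (Z.erase d) := by
    ext x
    have := @hZX x
    simp only [Finset.mem_inter, Finset.mem_insert, Finset.mem_erase]
    tauto
  have h5 := S.submodular (hC _ hEX) (hC _ hZX) (by rw [hu]; exact hXe)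
  rw [hu, hin] at h5
  have h6 := S.r_le_card (hC _ hEX)
  have heE : e ∉ X.erase d := fun h => heX (hEX h)
  have h7 := Finset.card_erase_add_one hdX
  have h8 : (insert e (X.erase d)).card = i := by
    rw [Finset.card_insert_of_notMem heE]; omega
  have h9 := hmin (insert e (X.erase d)) (Finset.mem_filter.2 ⟨hC _ hEX, by omega, h8⟩)
  simp only [Finset.sum_insert heE] at h9
  have h10 := Finset.add_sum_erase X f hdX
  omega

theorem whitney_eq (i : ℕ) (hi : i ≤ S.rank) :
    S.whitney i = (-1 : ℤ) ^ i * ∑ X ∈ S.C.filter (fun X => S.r X = i), (-1 : ℤ) ^ X.card := by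
  unfold whitney charPoly
  congr 1
  rw [Polynomial.finsetSum_coeff, Finset.sum_filter]
  refine Finset.sum_congr rfl fun X hX => ?_
  have h1 : S.r X ≤ S.rank := Finset.le_sup (f := S.r) hX
  have h2 : (-1 : Polynomial ℤ) ^ X.card = Polynomial.C ((-1 : ℤ) ^ X.card) := by simp
  rw [h2, Polynomial.coeff_C_mul, Polynomial.coeff_X_pow]
  by_cases h : S.r X = i
  · simp [h]
  · rw [if_neg h, if_neg (by omega), mul_zero]

end aux

end Semimatroid

/-- For a loopless semimatroid, `w_0(𝒞) = 1` and `w_i(𝒞) > 0` for all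
`0 ≤ i ≤ r(𝒞)`: the coefficients of `χ(𝒞;t)` are nonzero and strictly alternate in sign,
with leading coefficient `1`. -/
theorem Semimatroid.whitney_pos
    {E : Type*} [DecidableEq E] [Fintype E] (S : Semimatroid E)
    (hloopless : ¬ ∃ e : E, {e} ∈ S.C ∧ S.r {e} = 0) :
    S.whitney 0 = 1 ∧ ∀ i ≤ S.rank, 0 < S.whitney i := by
  classical
  constructor
  · rw [S.whitney_eq 0 (Nat.zero_le _)]
    have : S.C.filter (fun X => S.r X = 0) = {∅} := by
      ext X
      rw [Finset.mem_filter, Finset.mem_singleton]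
      constructor
      · rintro ⟨hX, h0⟩
        by_contra hne
        obtain ⟨e, he⟩ := Finset.nonempty_iff_ne_empty.2 hne
        have hsub : {e} ⊆ X := Finset.singleton_subset_iff.2 he
        have hC := S.mem_of_subset hX hsub
        have := S.r_mono hC hX hsub
        exact hloopless ⟨e, hC, by omega⟩
      · rintro rfl
        exact ⟨S.empty_mem', S.r_empty'⟩
    rw [this]
    simp
  · intro i hi
    let f : E → ℕ := fun e => (Fintype.equivFin E e : ℕ)
    have hf : Function.Injective f := fun a b h =>
      (Fintype.equivFin E).injective (Fin.ext h)
    rw [S.whitney_eq i hi, ← Finset.sum_filter_add_sum_filter_not _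
      (fun X => ∃ e, S.Bad f X e), S.sum_bad f hf i, zero_add, Finset.mul_sum]
    obtain ⟨X, hX, hXr, hXb⟩ := S.exists_nbc f hloopless i hi
    apply Finset.sum_pos
    · intro Y hY
      obtain ⟨hY1, hY2⟩ := Finset.mem_filter.1 hY
      obtain ⟨hY3, hY4⟩ := Finset.mem_filter.1 hY1
      have h1 := S.card_le_of_not_bad f hf Y hY3 (fun e _ hb => hY2 ⟨e, hb⟩)
      have h2 := S.r_le_card hY3
      have h3 : Y.card = i := by omega
      rw [h3, ← mul_pow]
      simp
    · refine ⟨X, ?_⟩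
      rw [Finset.mem_filter, Finset.mem_filter]
      exact ⟨⟨hX, hXr⟩, fun ⟨e, he⟩ => hXb e he⟩
end
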